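/- Let σ ∈ K_n and suppose there is an index i such that the permutation π = ∇_i(σ) of length n−1 has exactly one 2-block, say at positions j, j+1, and this 2-block is strict, i.e., it is not contained in a 3-block (there is no set of three consecutive positions of π containing j and j+1 whose values are three consecutive integers). Then σ has a prince, i.e., there exists τ ∈ K_{n−1} with τ ≺ σ. -/

import Mathlib

open Equiv

/-- The Manhattan distance between two elements of `Fin n`. -/
def fdist {n : ℕ} (a b : Fin n) : ℕ := ((a : ℤ) - (b : ℤ)).natAbs

/-- A king permutation: no two adjacent positions carry adjacent values. -/
def IsKing {n : ℕ} (σ : Equiv.Perm (Fin n)) : Prop :=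
  ∀ i j : Fin n, (j : ℕ) = (i : ℕ) + 1 → fdist (σ i) (σ j) ≠ 1

/-- Pattern containment `π ⪯ σ`. -/
def Contains {m n : ℕ} (π : Equiv.Perm (Fin m)) (σ : Equiv.Perm (Fin n)) : Prop :=
  ∃ f : Fin m ↪o Fin n, ∀ a b : Fin m, π a < π b ↔ σ (f a) < σ (f b)

/-- Strict pattern containment `π ≺ σ`. -/
def StrictContains {m n : ℕ} (π : Equiv.Perm (Fin m)) (σ : Equiv.Perm (Fin n)) : Prop :=
  Contains π σ ∧ m < n

/-- `nabla σ i` deletes the `i`-th entry of `σ` and standardizes. -/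
def nabla {n : ℕ} (σ : Equiv.Perm (Fin (n + 1))) (i : Fin (n + 1)) : Equiv.Perm (Fin n) :=
  Equiv.removeNone ((finSuccEquiv' i).symm.trans (σ.trans (finSuccEquiv' (σ i))))

/-- `nablaStar σ a` deletes the value `a` from `σ` and standardizes. -/
def nablaStar {n : ℕ} (σ : Equiv.Perm (Fin (n + 1))) (a : Fin (n + 1)) : Equiv.Perm (Fin n) :=
  nabla σ (σ⁻¹ a)

/-- The permutation [2413] (0-based one-line notation [1,3,0,2]). -/
def p2413 : Equiv.Perm (Fin 4) :=
  ⟨![1, 3, 0, 2], ![2, 0, 3, 1], by intro x; fin_cases x <;> rfl, by intro x; fin_cases x <;> rfl⟩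

/-- The permutation [3142] (0-based one-line notation [2,0,3,1]). -/
def p3142 : Equiv.Perm (Fin 4) :=
  ⟨![2, 0, 3, 1], ![1, 3, 0, 2], by intro x; fin_cases x <;> rfl, by intro x; fin_cases x <;> rfl⟩

/-- `σ i` vertically separates `σ j` from `σ k`. -/
def VSep {n : ℕ} (σ : Equiv.Perm (Fin n)) (i j k : Fin n) : Prop :=
  i ≠ j ∧ i ≠ k ∧ j ≠ k ∧ fdist i j = 1 ∧ fdist i k = 1 ∧ fdist (σ j) (σ k) = 1

/-- `σ i` horizontally separates `σ j` from `σ k`. -/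
def HSep {n : ℕ} (σ : Equiv.Perm (Fin n)) (i j k : Fin n) : Prop :=
  i ≠ j ∧ i ≠ k ∧ j ≠ k ∧ fdist (σ i) (σ j) = 1 ∧ fdist (σ i) (σ k) = 1 ∧ fdist j k = 1

/-- `σ i` separates `σ j` from `σ k`. -/
def Separates {n : ℕ} (σ : Equiv.Perm (Fin n)) (i j k : Fin n) : Prop :=
  VSep σ i j k ∨ HSep σ i j k

/-- `π` has a 2-block at positions `j`, `j+1` (0-based). -/
def HasTwoBlockAt {n : ℕ} (π : Equiv.Perm (Fin n)) (j : ℕ) : Prop :=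
  ∃ hj : j + 1 < n, fdist (π ⟨j, by omega⟩) (π ⟨j + 1, hj⟩) = 1

/-- `π` has a 3-block at positions `p`, `p+1`, `p+2` (0-based). -/
def HasThreeBlockAt {n : ℕ} (π : Equiv.Perm (Fin n)) (p : ℕ) : Prop :=
  ∃ hp : p + 2 < n, ∃ m : ℕ,
    ({(π ⟨p, by omega⟩ : ℕ), (π ⟨p + 1, by omega⟩ : ℕ), (π ⟨p + 2, by omega⟩ : ℕ)} : Finset ℕ)
      = {m, m + 1, m + 2}

/-!
Deleting `σ r` from a king permutation `σ` leaves a king permutation unless `σ r` separates two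
entries. The given 2-block of `nabla σ i` therefore comes from two entries separated by `σ i`, and,
up to inverting `σ`, they sit at the positions `x`, `y` on either side of `i`. Strictness says that
neither of these two entries separates the other one horizontally from anything. If every entry of
`σ` separated two others, then the entry at `x` would separate vertically, so that the entry beyond
`x` would have a value next to `σ i`, and likewise for the entry at `z` beyond `y`. As these two
exhaust the values next to `σ i`, the pair `i`, `z` around `y` is again strictly separated, and the
configuration could be shifted along the positions forever.
-/

section Adjacency

variable {n : ℕ}

theorem fdist_comm (a b : Fin n) : fdist a b = fdist b a := by
  unfold fdist
  omega

theorem ne_of_fdist_eq_one {a b : Fin n} (h : fdist a b = 1) : a ≠ b := by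
  rintro rfl
  unfold fdist at h
  omega

theorem eq_or_eq_of_fdist_eq_one {a b c d : Fin n} (hbc : b ≠ c) (hb : fdist a b = 1)
    (hc : fdist a c = 1) (hd : fdist a d = 1) : d = b ∨ d = c := by
  rw [Ne, Fin.ext_iff] at hbc
  rw [Fin.ext_iff, Fin.ext_iff]
  unfold fdist at hb hc hd
  omega

theorem fdist_eq_one_iff_succAbove (p : Fin (n + 1)) {a b : Fin n} (hab : a ≠ b) :
    fdist a b = 1 ↔ fdist (p.succAbove a) (p.succAbove b) = 1 ∨
      (fdist p (p.succAbove a) = 1 ∧ fdist p (p.succAbove b) = 1) := by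
  rw [Ne, Fin.ext_iff] at hab
  simp only [fdist, Fin.succAbove, Fin.lt_def]
  split_ifs <;> simp only [Fin.val_castSucc, Fin.val_succ] at * <;> omega

end Adjacency

section King

variable {n : ℕ} {σ : Equiv.Perm (Fin n)}

theorem IsKing.fdist_apply_ne_one (hσ : IsKing σ) {i j : Fin n} (h : fdist i j = 1) :
    fdist (σ i) (σ j) ≠ 1 := by
  obtain hij | hji : (j : ℕ) = i + 1 ∨ (i : ℕ) = j + 1 := by
    unfold fdist at h
    omega
  · exact hσ i j hij
  · rw [fdist_comm]
    exact hσ j i hji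

theorem IsKing.inv (hσ : IsKing σ) : IsKing σ⁻¹ := by
  intro i j hij h
  refine hσ.fdist_apply_ne_one h ?_
  simp only [Equiv.Perm.coe_inv, Equiv.apply_symm_apply, fdist]
  omega

end King

section Separation

variable {n : ℕ} {σ : Equiv.Perm (Fin n)} {i j k : Fin n}

theorem VSep.symm (h : VSep σ i j k) : VSep σ i k j := by
  obtain ⟨hij, hik, hjk, dij, dik, djk⟩ := h
  exact ⟨hik, hij, hjk.symm, dik, dij, fdist_comm (σ j) (σ k) ▸ djk⟩

theorem HSep.symm (h : HSep σ i j k) : HSep σ i k j := by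
  obtain ⟨hij, hik, hjk, dij, dik, djk⟩ := h
  exact ⟨hik, hij, hjk.symm, dik, dij, fdist_comm j k ▸ djk⟩

theorem vSep_inv_iff : VSep σ⁻¹ i j k ↔ HSep σ (σ⁻¹ i) (σ⁻¹ j) (σ⁻¹ k) := by
  simp [VSep, HSep]

theorem hSep_inv_iff : HSep σ⁻¹ i j k ↔ VSep σ (σ⁻¹ i) (σ⁻¹ j) (σ⁻¹ k) := by
  simp [VSep, HSep]

theorem separates_inv_iff : Separates σ⁻¹ i j k ↔ Separates σ (σ⁻¹ i) (σ⁻¹ j) (σ⁻¹ k) := by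
  rw [Separates, Separates, vSep_inv_iff, hSep_inv_iff, or_comm]

theorem Separates.exists_vSep_or_hSep {a b : Fin n} (h : Separates σ i j k)
    (ha : fdist i a = 1) (hb : fdist (σ i) (σ b) = 1) :
    (∃ c, VSep σ i a c) ∨ ∃ c, HSep σ i b c := by
  rcases h with h | h
  · have ⟨_, _, hjk, dij, dik, _⟩ := h
    rcases eq_or_eq_of_fdist_eq_one hjk dij dik ha with rfl | rfl
    exacts [.inl ⟨k, h⟩, .inl ⟨j, h.symm⟩]
  · have ⟨_, _, hjk, dij, dik, _⟩ := h
    rcases eq_or_eq_of_fdist_eq_one (σ.injective.ne hjk) dij dik hb with hb | hb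
    all_goals obtain rfl := σ.injective hb
    exacts [.inr ⟨k, h⟩, .inr ⟨j, h.symm⟩]

theorem Separates.not_separates_rotate (hσ : IsKing σ) (h : Separates σ i j k) :
    ¬ Separates σ j k i := by
  intro h'
  have hne {a b : Fin n} (h : fdist a b = 1) := hσ.fdist_apply_ne_one h
  rcases h with ⟨-, -, -, dij, dik, -⟩ | ⟨-, -, -, dij, dik, -⟩ <;>
    rcases h' with ⟨-, -, -, -, dji, dki⟩ | ⟨-, -, -, -, dji, dki⟩
  · exact hne dik (fdist_comm (σ k) (σ i) ▸ dki)
  · exact hne dij (fdist_comm (σ j) (σ i) ▸ dji)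
  · exact hne dji (fdist_comm (σ i) (σ j) ▸ dij)
  · exact hne dki (fdist_comm (σ i) (σ k) ▸ dik)

end Separation

section StrictSeparation

variable {n : ℕ} {σ : Equiv.Perm (Fin n)} {i x y z : Fin n}

/-- `σ i` vertically separates `σ x` from `σ y`, and the 2-block that `σ x` and `σ y` form once
`σ i` is deleted is not contained in a 3-block. In a king permutation a third entry of such a
3-block is next to one of `x`, `y` in position and next to the other one in value, which is what
the two conditions on horizontal separation exclude. -/
def StrictVSep (σ : Equiv.Perm (Fin n)) (i x y : Fin n) : Prop :=
  VSep σ i x y ∧ (∀ z, ¬ HSep σ x y z) ∧ ∀ z, ¬ HSep σ y x z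

theorem StrictVSep.symm (h : StrictVSep σ i x y) : StrictVSep σ i y x :=
  ⟨h.1.symm, h.2.2, h.2.1⟩

theorem StrictVSep.exists_vSep_right (h : StrictVSep σ i x y)
    (hsep : ∃ p q, Separates σ y p q) : ∃ z, VSep σ y i z := by
  obtain ⟨⟨-, -, -, -, hiy, hxy⟩, -, hyx⟩ := h
  obtain ⟨p, q, hpq⟩ := hsep
  rw [fdist_comm] at hiy hxy
  exact (hpq.exists_vSep_or_hSep hiy hxy).resolve_right fun ⟨z, hz⟩ => hyx z hz

theorem StrictVSep.not_hSep_left_of_vSep (h : StrictVSep σ i x y) (hz : VSep σ y i z)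
    (hx : ∃ p q, Separates σ x p q) (w : Fin n) : ¬ HSep σ i z w := by
  rintro ⟨-, -, hzw, diz, diw, dzw⟩
  obtain ⟨u, -, -, hiu, dxi, dxu, diu⟩ := h.symm.exists_vSep_right hx
  obtain ⟨⟨-, -, hxy, dix, diy, -⟩, -⟩ := h
  obtain ⟨-, -, hiz, -, dyz, -⟩ := hz
  rw [Ne, Fin.ext_iff] at hiu hxy hiz
  rcases eq_or_eq_of_fdist_eq_one (σ.injective.ne hzw) diz diw diu with huz | huw
  · obtain rfl := σ.injective huz
    unfold fdist at dix diy dyz dxu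
    omega
  · obtain rfl := σ.injective huw
    unfold fdist at dix diy dyz dxu dzw
    omega

theorem StrictVSep.not_hSep_right_of_vSep (hσ : IsKing σ) (h : StrictVSep σ i x y)
    (hz : VSep σ y i z) (w : Fin n) : ¬ HSep σ z i w := by
  rintro ⟨-, hzw, -, -, dzw, diw⟩
  obtain ⟨⟨-, -, hxy, dix, diy, dxy⟩, hnot, -⟩ := h
  obtain ⟨-, hyz, -, -, dyz, -⟩ := hz
  rw [fdist_comm] at dzw
  rcases eq_or_eq_of_fdist_eq_one hxy dix diy diw with rfl | rfl
  · exact hnot z ⟨hxy, hzw.symm, hyz, dxy, dzw, dyz⟩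
  · exact hσ.fdist_apply_ne_one dyz dzw

theorem StrictVSep.exists_strictVSep_right (hσ : IsKing σ)
    (hsep : ∀ r, ∃ p q, Separates σ r p q) (h : StrictVSep σ i x y) :
    ∃ z, StrictVSep σ y i z := by
  obtain ⟨z, hz⟩ := h.exists_vSep_right (hsep y)
  exact ⟨z, hz, h.not_hSep_left_of_vSep hz (hsep x), h.not_hSep_right_of_vSep hσ hz⟩

theorem not_strictVSep_of_lt (hσ : IsKing σ) (hsep : ∀ r, ∃ p q, Separates σ r p q)
    (hiy : i < y) : ¬ StrictVSep σ i x y := by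
  induction y using WellFoundedGT.induction generalizing i x with
  | ind y ih =>
    intro h
    obtain ⟨z, hz⟩ := h.exists_strictVSep_right hσ hsep
    obtain ⟨-, -, -, -, diy, -⟩ := h.1
    obtain ⟨-, -, hiz, -, dyz, -⟩ := hz.1
    have hyz : y < z := by
      rw [Ne, Fin.ext_iff] at hiz
      rw [Fin.lt_def] at hiy ⊢
      unfold fdist at diy dyz
      omega
    exact ih z hyz hyz hz

theorem StrictVSep.exists_forall_not_separates (hσ : IsKing σ) (h : StrictVSep σ i x y) :
    ∃ r, ∀ p q, ¬ Separates σ r p q := by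
  by_contra! hsep
  obtain ⟨-, -, hxy, dix, diy, -⟩ := h.1
  obtain hlt | hlt : i < y ∨ i < x := by
    rw [Ne, Fin.ext_iff] at hxy
    rw [Fin.lt_def, Fin.lt_def]
    unfold fdist at dix diy
    omega
  · exact not_strictVSep_of_lt hσ hsep hlt h
  · exact not_strictVSep_of_lt hσ hsep hlt h.symm

theorem Separates.exists_forall_not_separates (hσ : IsKing σ) (h : Separates σ i x y)
    (hx : ∀ z, ¬ Separates σ x y z) (hy : ∀ z, ¬ Separates σ y x z) :
    ∃ r, ∀ p q, ¬ Separates σ r p q := by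
  rcases h with hV | hH
  · exact StrictVSep.exists_forall_not_separates hσ
      ⟨hV, fun z hz => hx z (.inr hz), fun z hz => hy z (.inr hz)⟩
  · have hinv : StrictVSep σ⁻¹ (σ i) (σ x) (σ y) := by
      refine ⟨vSep_inv_iff.2 (by simpa using hH), fun z hz => hx (σ⁻¹ z) (.inl ?_),
        fun z hz => hy (σ⁻¹ z) (.inl ?_)⟩ <;>
      simpa using hSep_inv_iff.1 hz
    obtain ⟨r, hr⟩ := hinv.exists_forall_not_separates hσ.inv
    refine ⟨σ⁻¹ r, fun p q hpq => hr (σ p) (σ q) ?_⟩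
    rw [separates_inv_iff]
    simpa using hpq

end StrictSeparation

section Nabla

variable {n : ℕ} {σ : Equiv.Perm (Fin (n + 1))} {i : Fin (n + 1)} {a b c : Fin n}

theorem succAbove_nabla_apply (σ : Equiv.Perm (Fin (n + 1))) (i : Fin (n + 1)) (k : Fin n) :
    (σ i).succAbove (nabla σ i k) = σ (i.succAbove k) := by
  obtain ⟨y, hy⟩ := Fin.exists_succAbove_eq (σ.injective.ne (Fin.succAbove_ne i k))
  have hsome : some (nabla σ i k) = finSuccEquiv' (σ i) (σ (i.succAbove k)) := by
    rw [nabla, Equiv.removeNone_some _ ⟨y, by simp [← hy]⟩]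
    simp
  rw [← finSuccEquiv'_symm_some, hsome, Equiv.symm_apply_apply]

theorem strictContains_nabla (σ : Equiv.Perm (Fin (n + 1))) (i : Fin (n + 1)) :
    StrictContains (nabla σ i) σ := by
  refine ⟨⟨Fin.succAboveOrderEmb i, fun a b => ?_⟩, n.lt_succ_self⟩
  simp [← succAbove_nabla_apply]

theorem fdist_nabla_eq_one_iff (hab : a ≠ b) :
    fdist (nabla σ i a) (nabla σ i b) = 1 ↔
      fdist (σ (i.succAbove a)) (σ (i.succAbove b)) = 1 ∨
      (fdist (σ i) (σ (i.succAbove a)) = 1 ∧ fdist (σ i) (σ (i.succAbove b)) = 1) := by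
  rw [fdist_eq_one_iff_succAbove (σ i) ((nabla σ i).injective.ne hab), succAbove_nabla_apply,
    succAbove_nabla_apply]

theorem separates_of_fdist_nabla_eq_one (hσ : IsKing σ) (hpos : fdist a b = 1)
    (hval : fdist (nabla σ i a) (nabla σ i b) = 1) :
    Separates σ i (i.succAbove a) (i.succAbove b) := by
  have hab : a ≠ b := ne_of_fdist_eq_one hpos
  have hia : i ≠ i.succAbove a := (Fin.succAbove_ne i a).symm
  have hib : i ≠ i.succAbove b := (Fin.succAbove_ne i b).symm
  have hne : i.succAbove a ≠ i.succAbove b := Fin.succAbove_right_injective.ne hab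
  rw [fdist_eq_one_iff_succAbove i hab] at hpos
  rw [fdist_nabla_eq_one_iff hab] at hval
  rcases hpos with dab | ⟨dia, dib⟩ <;> rcases hval with vab | ⟨via, vib⟩
  · exact absurd vab (hσ.fdist_apply_ne_one dab)
  · exact .inr ⟨hia, hib, hne, via, vib, dab⟩
  · exact .inl ⟨hia, hib, hne, dia, dib, vab⟩
  · exact absurd via (hσ.fdist_apply_ne_one dia)

theorem isKing_nabla (hσ : IsKing σ) (hi : ∀ p q, ¬ Separates σ i p q) : IsKing (nabla σ i) := by
  intro a b hab hval
  have hpos : fdist a b = 1 := by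
    unfold fdist
    omega
  exact hi _ _ (separates_of_fdist_nabla_eq_one hσ hpos hval)

theorem separates_nabla (h : Separates σ (i.succAbove a) (i.succAbove b) (i.succAbove c)) :
    Separates (nabla σ i) a b c := by
  have hpos {a b : Fin n} (hab : a ≠ b) (h : fdist (i.succAbove a) (i.succAbove b) = 1) :
      fdist a b = 1 := (fdist_eq_one_iff_succAbove i hab).2 (.inl h)
  have hval {a b : Fin n} (hab : a ≠ b) (h : fdist (σ (i.succAbove a)) (σ (i.succAbove b)) = 1) :
      fdist (nabla σ i a) (nabla σ i b) = 1 := (fdist_nabla_eq_one_iff hab).2 (.inl h)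
  simp only [Separates, VSep, HSep, (Fin.succAbove_right_injective (p := i)).ne_iff] at h ⊢
  rcases h with ⟨hab, hac, hbc, dab, dac, dbc⟩ | ⟨hab, hac, hbc, dab, dac, dbc⟩
  · exact .inl ⟨hab, hac, hbc, hpos hab dab, hpos hac dac, hval hbc dbc⟩
  · exact .inr ⟨hab, hac, hbc, hval hab dab, hval hac dac, hpos hbc dbc⟩

theorem not_separates_of_nabla (hσ : IsKing σ)
    (h : Separates σ i (i.succAbove a) (i.succAbove b))
    (hno : ∀ c, ¬ Separates (nabla σ i) a b c) (z : Fin (n + 1)) :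
    ¬ Separates σ (i.succAbove a) (i.succAbove b) z := by
  rcases eq_or_ne z i with rfl | hz
  · exact h.not_separates_rotate hσ
  · obtain ⟨c, rfl⟩ := Fin.exists_succAbove_eq hz
    exact fun hc => hno c (separates_nabla hc)

theorem exists_isKing_nabla (hσ : IsKing σ) (hpos : fdist a b = 1)
    (hval : fdist (nabla σ i a) (nabla σ i b) = 1)
    (ha : ∀ c, ¬ Separates (nabla σ i) a b c) (hb : ∀ c, ¬ Separates (nabla σ i) b a c) :
    ∃ r, IsKing (nabla σ r) := by
  have hab := separates_of_fdist_nabla_eq_one hσ hpos hval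
  rw [fdist_comm] at hpos hval
  have hba := separates_of_fdist_nabla_eq_one hσ hpos hval
  obtain ⟨r, hr⟩ := hab.exists_forall_not_separates hσ (not_separates_of_nabla hσ hab ha)
    (not_separates_of_nabla hσ hba hb)
  exact ⟨r, isKing_nabla hσ hr⟩

end Nabla

section ThreeBlock

variable {n : ℕ} {π : Equiv.Perm (Fin n)} {a b c : Fin n}

theorem triple_eq_of_fdist_eq_one (hbc : b ≠ c) (hb : fdist a b = 1) (hc : fdist a c = 1) :
    ({(a : ℕ), (b : ℕ), (c : ℕ)} : Finset ℕ) =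
      {min (b : ℕ) c, min (b : ℕ) c + 1, min (b : ℕ) c + 2} := by
  rw [Ne, Fin.ext_iff] at hbc
  unfold fdist at hb hc
  ext t
  simp only [Finset.mem_insert, Finset.mem_singleton]
  omega

theorem hasThreeBlockAt_of_triple_eq {p m : ℕ}
    (hpos : ({(a : ℕ), (b : ℕ), (c : ℕ)} : Finset ℕ) = {p, p + 1, p + 2})
    (hval : ({(π a : ℕ), (π b : ℕ), (π c : ℕ)} : Finset ℕ) = {m, m + 1, m + 2}) :
    HasThreeBlockAt π p := by
  have hp : p + 2 < n := by
    have hmem : p + 2 ∈ ({(a : ℕ), (b : ℕ), (c : ℕ)} : Finset ℕ) := by simp [hpos]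
    simp only [Finset.mem_insert, Finset.mem_singleton] at hmem
    omega
  have hset : ({⟨p, by omega⟩, ⟨p + 1, by omega⟩, ⟨p + 2, hp⟩} : Finset (Fin n)) = {a, b, c} := by
    apply Finset.image_injective Fin.val_injective
    simpa only [Finset.image_insert, Finset.image_singleton] using hpos.symm
  refine ⟨hp, m, ?_⟩
  rw [← hval]
  simpa only [Finset.image_insert, Finset.image_singleton] using
    congrArg (Finset.image fun k => (π k : ℕ)) hset

theorem Separates.exists_hasThreeBlockAt (h : Separates π a b c) (hpos : fdist a b = 1)
    (hval : fdist (π a) (π b) = 1) :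
    ∃ p, HasThreeBlockAt π p ∧ (a : ℕ) ∈ Finset.Icc p (p + 2) ∧ (b : ℕ) ∈ Finset.Icc p (p + 2) := by
  obtain ⟨p, m, hp, hm⟩ : ∃ p m : ℕ,
      ({(a : ℕ), (b : ℕ), (c : ℕ)} : Finset ℕ) = {p, p + 1, p + 2} ∧
      ({(π a : ℕ), (π b : ℕ), (π c : ℕ)} : Finset ℕ) = {m, m + 1, m + 2} := by
    rw [fdist_comm] at hpos hval
    rcases h with ⟨-, hac, hbc, dab, dac, dbc⟩ | ⟨-, hac, hbc, dab, dac, dbc⟩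
    · refine ⟨min b c, min (π a) (π c), triple_eq_of_fdist_eq_one hbc dab dac, ?_⟩
      rw [Finset.insert_comm]
      exact triple_eq_of_fdist_eq_one (π.injective.ne hac) hval dbc
    · refine ⟨min a c, min (π b) (π c), ?_, triple_eq_of_fdist_eq_one (π.injective.ne hbc) dab dac⟩
      rw [Finset.insert_comm]
      exact triple_eq_of_fdist_eq_one hac hpos dbc
  have ha : (a : ℕ) ∈ ({p, p + 1, p + 2} : Finset ℕ) := by simp [← hp]
  have hb : (b : ℕ) ∈ ({p, p + 1, p + 2} : Finset ℕ) := by simp [← hp]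
  refine ⟨p, hasThreeBlockAt_of_triple_eq hp hm, ?_, ?_⟩ <;>
    simp only [Finset.mem_insert, Finset.mem_singleton, Finset.mem_Icc] at * <;> omega

end ThreeBlock

theorem strict_two_block_implies_prince_general (n : ℕ) (σ : Equiv.Perm (Fin (n + 1)))
    (hσ : IsKing σ) (i : Fin (n + 1)) (j : ℕ) (hblock : HasTwoBlockAt (nabla σ i) j)
    (hstrict : ∀ p : ℕ, (p = j ∨ p + 1 = j) → ¬ HasThreeBlockAt (nabla σ i) p) :
    ∃ τ : Equiv.Perm (Fin n), IsKing τ ∧ StrictContains τ σ := by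
  obtain ⟨hj, hval⟩ := hblock
  set a : Fin n := ⟨j, by omega⟩
  set b : Fin n := ⟨j + 1, hj⟩
  have hpos : fdist a b = 1 := by simp [fdist, a, b]
  have hnot (p : ℕ) (ha : (a : ℕ) ∈ Finset.Icc p (p + 2)) (hb : (b : ℕ) ∈ Finset.Icc p (p + 2)) :
      ¬ HasThreeBlockAt (nabla σ i) p := by
    simp only [Finset.mem_Icc, a, b] at ha hb
    exact hstrict p (by omega)
  obtain ⟨r, hr⟩ : ∃ r, IsKing (nabla σ r) := by
    refine exists_isKing_nabla hσ hpos hval (fun _ hc => ?_) fun _ hc => ?_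
    · obtain ⟨p, hp, ha, hb⟩ := hc.exists_hasThreeBlockAt hpos hval
      exact hnot p ha hb hp
    · rw [fdist_comm] at hpos hval
      obtain ⟨p, hp, hb, ha⟩ := hc.exists_hasThreeBlockAt hpos hval
      exact hnot p ha hb hp
  exact ⟨nabla σ r, hr, strictContains_nabla σ r⟩

/-- if some one-entry deletion of the king `σ` has exactly one 2-block
and that 2-block is strict (not contained in a 3-block), then `σ` has a prince. -/
theorem strict_two_block_implies_prince (n : ℕ) (σ : Equiv.Perm (Fin (n + 2)))
    (hσ : IsKing σ) (i : Fin (n + 2)) (j : ℕ)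
    (hunique : ∀ j' : ℕ, HasTwoBlockAt (nabla σ i) j' ↔ j' = j)
    (hstrict : ∀ p : ℕ, (p = j ∨ p + 1 = j) → ¬ HasThreeBlockAt (nabla σ i) p) :
    ∃ τ : Equiv.Perm (Fin (n + 1)), IsKing τ ∧ StrictContains τ σ :=
  strict_two_block_implies_prince_general (n + 1) σ hσ i j ((hunique j).2 rfl) hstrict
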